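/- Let H be a complex Hilbert space and let E, F be effects on H. If the four Jordan products E ∘ F, (1−E) ∘ F, E ∘ (1−F), and (1−E) ∘ (1−F) are all positive operators, then E ⊓ F ≥ 0, (1−E) ⊓ F ≥ 0, E ⊓ (1−F) ≥ 0, and (1−E) ⊓ (1−F) ≥ 0, where ⊓ denotes the generalized infimum. -/

import Mathlib

/-!
Since `(a + b)² - (a - b)² = 2 (a b + b a)`, positivity of the Jordan product of `a` and `b` means
`(a - b)² ≤ (a + b)²`. The square root is operator monotone, so `|a - b| ≤ a + b` as soon as
`a + b` is positive, and this says that `a ⊓ b` is positive.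
-/

variable {H : Type*} [NormedAddCommGroup H] [InnerProductSpace ℂ H] [CompleteSpace H]

/-- An effect on a complex Hilbert space: an operator `E` with `0 ≤ E ≤ 1` in the Loewner order. -/
def IsEffect (E : H →L[ℂ] H) : Prop := 0 ≤ E ∧ E ≤ 1


/-- The Jordan product E ∘ F = ½(EF + FE). -/
noncomputable def jordan (E F : H →L[ℂ] H) : H →L[ℂ] H := (2 : ℂ)⁻¹ • (E * F + F * E)


/-- The absolute value |A| of a selfadjoint operator: the positive square root of A². -/
noncomputable def opAbs (A : H →L[ℂ] H) : H →L[ℂ] H := CFC.sqrt (A ^ 2)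

/-- The generalized infimum E ⊓ F = ½(E + F - |E - F|). -/
noncomputable def ginf (E F : H →L[ℂ] H) : H →L[ℂ] H := (2 : ℂ)⁻¹ • (E + F - opAbs (E - F))

section JordanProduct

open scoped ComplexOrder

/-- The Jordan product `a ∘ b`, which specializes to `jordan` on operators. It is normalized by a
complex scalar in order to agree with `jordan` definitionally. -/
noncomputable def jordanProduct {A : Type*} [Add A] [Mul A] [SMul ℂ A] (a b : A) : A :=
  (2 : ℂ)⁻¹ • (a * b + b * a)

theorem inv_two_smul_nonneg_iff {M : Type*} [AddCommMonoid M] [PartialOrder M] [Module ℂ M]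
    [PosSMulMono ℂ M] {x : M} : 0 ≤ (2 : ℂ)⁻¹ • x ↔ 0 ≤ x :=
  ⟨fun h ↦ by simpa using smul_nonneg (zero_le_two (α := ℂ)) h,
    smul_nonneg (inv_nonneg.mpr zero_le_two)⟩

theorem jordanProduct_nonneg_iff {A : Type*} [NonUnitalNonAssocSemiring A] [PartialOrder A]
    [Module ℂ A] [PosSMulMono ℂ A] {a b : A} : 0 ≤ jordanProduct a b ↔ 0 ≤ a * b + b * a :=
  inv_two_smul_nonneg_iff

theorem sub_mul_self_le_add_mul_self {R : Type*} [NonUnitalNonAssocRing R] [PartialOrder R]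
    [IsOrderedAddMonoid R] {a b : R} (h : 0 ≤ a * b + b * a) :
    (a - b) * (a - b) ≤ (a + b) * (a + b) := by
  have hdiff : (a + b) * (a + b) - (a - b) * (a - b) = 2 • (a * b + b * a) := by
    simp only [add_mul, mul_add, sub_mul, mul_sub]
    abel
  rw [← sub_nonneg, hdiff]
  exact nsmul_nonneg h 2

end JordanProduct

section GeneralizedInf

open scoped ComplexOrder

variable {A : Type*} [NonUnitalCStarAlgebra A] [PartialOrder A] [StarOrderedRing A]

/-- The generalized infimum `a ⊓ b` in a C⋆-algebra, meant for selfadjoint `a` and `b`. It uses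
the library's absolute value `CFC.abs`, which on selfadjoint operators agrees with `opAbs`. -/
noncomputable def generalizedInf (a b : A) : A := (2 : ℂ)⁻¹ • (a + b - CFC.abs (a - b))

theorem generalizedInf_nonneg_iff {a b : A} :
    0 ≤ generalizedInf a b ↔ CFC.abs (a - b) ≤ a + b :=
  inv_two_smul_nonneg_iff.trans sub_nonneg

theorem cfcAbs_le_of_mul_self_le_mul_self {a b : A} (ha : IsSelfAdjoint a) (hb : 0 ≤ b)
    (h : a * a ≤ b * b) : CFC.abs a ≤ b :=
  calc
    CFC.abs a = CFC.sqrt (a * a) := by rw [CFC.abs, ha.star_eq]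
    _ ≤ CFC.sqrt (b * b) := CFC.sqrt_le_sqrt _ _ h
    _ = b := CFC.sqrt_mul_self b

theorem generalizedInf_nonneg_of_jordanProduct_nonneg {a b : A} (hsub : IsSelfAdjoint (a - b))
    (hadd : 0 ≤ a + b) (h : 0 ≤ jordanProduct a b) : 0 ≤ generalizedInf a b :=
  generalizedInf_nonneg_iff.mpr <| cfcAbs_le_of_mul_self_le_mul_self hsub hadd <|
    sub_mul_self_le_add_mul_self <| jordanProduct_nonneg_iff.mp h

end GeneralizedInf

theorem ginf_nonneg_of_jordan_nonneg'_general {A : Type*} [CStarAlgebra A] [PartialOrder A]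
    [StarOrderedRing A] {e f : A} (he : e ∈ Set.Icc 0 1) (hf : f ∈ Set.Icc 0 1)
    (h₁ : 0 ≤ jordanProduct e f) (h₂ : 0 ≤ jordanProduct (1 - e) f)
    (h₃ : 0 ≤ jordanProduct e (1 - f)) (h₄ : 0 ≤ jordanProduct (1 - e) (1 - f)) :
    0 ≤ generalizedInf e f ∧ 0 ≤ generalizedInf (1 - e) f ∧ 0 ≤ generalizedInf e (1 - f) ∧
      0 ≤ generalizedInf (1 - e) (1 - f) := by
  have nonneg_case {a b : A} (ha : 0 ≤ a) (hb : 0 ≤ b) :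
      0 ≤ jordanProduct a b → 0 ≤ generalizedInf a b :=
    generalizedInf_nonneg_of_jordanProduct_nonneg (ha.isSelfAdjoint.sub hb.isSelfAdjoint)
      (add_nonneg ha hb)
  have he' : 0 ≤ 1 - e := sub_nonneg.mpr he.2
  have hf' : 0 ≤ 1 - f := sub_nonneg.mpr hf.2
  exact ⟨nonneg_case he.1 hf.1 h₁, nonneg_case he' hf.1 h₂, nonneg_case he.1 hf' h₃,
    nonneg_case he' hf' h₄⟩

theorem opAbs_eq_cfcAbs {A : H →L[ℂ] H} (hA : IsSelfAdjoint A) : opAbs A = CFC.abs A := by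
  rw [opAbs, CFC.abs, hA.star_eq, sq]

theorem ginf_eq_generalizedInf {E F : H →L[ℂ] H} (hE : IsSelfAdjoint E) (hF : IsSelfAdjoint F) :
    ginf E F = generalizedInf E F := by
  rw [ginf, generalizedInf, opAbs_eq_cfcAbs (hE.sub hF)]

/-- (JOR) implies (GINF): positivity of all four Jordan products gives positivity of all four
generalized infima. -/
theorem ginf_nonneg_of_jordan_nonneg' (E F : H →L[ℂ] H) (hE : IsEffect E) (hF : IsEffect F)
    (h₁ : 0 ≤ jordan E F) (h₂ : 0 ≤ jordan (1 - E) F)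
    (h₃ : 0 ≤ jordan E (1 - F)) (h₄ : 0 ≤ jordan (1 - E) (1 - F)) :
    0 ≤ ginf E F ∧ 0 ≤ ginf (1 - E) F ∧ 0 ≤ ginf E (1 - F) ∧
      0 ≤ ginf (1 - E) (1 - F) := by
  simpa only [ginf_eq_generalizedInf, hE.1.isSelfAdjoint, hF.1.isSelfAdjoint, IsSelfAdjoint.one,
    IsSelfAdjoint.sub] using ginf_nonneg_of_jordan_nonneg'_general hE hF h₁ h₂ h₃ h₄
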